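/- In the setting of the D2Q9 MRT model — velocities c_1,…,c_9 = (0,0),(1,0),(0,1),(−1,0),(0,−1),(1,1),(−1,1),(−1,−1),(1,−1); M_{ij} = p_i(c_j) with (p_1,…,p_9) = (1, X, Y, X², Y², XY, X²Y, XY², X²Y²); ω = (ω_0, ω_1, ω_2, ω_1, ω_2, ω̃, ω̃, ω̃, ω̃) with all entries strictly positive and summing to 1; W = diag(ω); E = ω𝟙ᵀ; S = diag(s_0, s_x, s_y, s_{2|x²}, s_{2|y²}, s_{2|xy}, s_{3|x²y}, s_{3|xy²}, s_{4|x²y²}) — assume the symmetry conditions s_{3|x²y} = s_y, s_{3|xy²} = s_x, s_{4|x²y²} = s_{2|x²} = s_{2|y²}, assume s_x, s_y, s_{2|x²}, s_{2|y²}, s_{2|xy} are all ≥ 0, and let c ≤ 0. Then for J = M^{-1}SM·(E − I) + cE, the matrix J·W is symmetric and negative semidefinite; consequently there exist an invertible P ∈ ℝ^{9×9} and nonnegative λ_1,…,λ_9 with PᵀP = W^{-1} and P·J = −diag(λ_1,…,λ_9)·P, i.e., the D2Q9 MRT-LB model satisfies the stability structure. -/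

import Mathlib

open Matrix

/-- The nine D2Q9 discrete velocities. -/
noncomputable def c9 : Fin 9 → ℝ × ℝ :=
  ![(0, 0), (1, 0), (0, 1), (-1, 0), (0, -1), (1, 1), (-1, 1), (-1, -1), (1, -1)]

/-- The nine monomials `1, X, Y, X², Y², XY, X²Y, XY², X²Y²`. -/
noncomputable def p9 : Fin 9 → ℝ → ℝ → ℝ :=
  ![fun _ _ => 1, fun x _ => x, fun _ y => y, fun x _ => x ^ 2, fun _ y => y ^ 2,
    fun x y => x * y, fun x y => x ^ 2 * y, fun x y => x * y ^ 2, fun x y => x ^ 2 * y ^ 2]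

/-- The natural D2Q9 transformation matrix `M_{ij} = p_i(c_j)`. -/
noncomputable def M9 : Matrix (Fin 9) (Fin 9) ℝ :=
  Matrix.of fun i j => p9 i (c9 j).1 (c9 j).2

/-!
The collision Jacobian satisfies `J W = -Λ V + c ω ωᵀ` with `V = W - ω ωᵀ` the covariance matrix of
the probability vector `ω`. The rows of `M` are monomials, so they have definite parity under the
reflections `x ↦ -x` and `y ↦ -y` of the velocity set, and the symmetry conditions on `S` make the
relaxation rate depend on the parity only, except for the constant monomial. Hence `Λ` is a
nonnegative combination of parity projections plus a rank-one matrix `u 𝟙ᵀ`; the latter is killed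
by `V`, and the former commute with `V` because `ω` is invariant under the reflections. A product of
commuting positive semidefinite matrices is positive semidefinite, so `-J W` is. Diagonalizing the
congruent matrix `W^(-1/2) (-J W) W^(-1/2)` then produces `P` and `λ`.
-/

open scoped ComplexOrder Kronecker MatrixOrder

section SimultaneousDiagonalization

variable {ι 𝕜 : Type*} [Fintype ι] [RCLike 𝕜]

theorem posSemidef_mul_of_commute {A B : Matrix ι ι 𝕜} (hA : A.PosSemidef) (hB : B.PosSemidef)
    (hAB : Commute A B) : (A * B).PosSemidef := by
  classical exact (hAB.mul_nonneg hA.nonneg hB.nonneg).posSemidef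

variable [DecidableEq ι]

theorem exists_unitary_mul_eq_diagonal_mul {A : Matrix ι ι 𝕜} (hA : A.PosSemidef) :
    ∃ U ∈ unitary (Matrix ι ι 𝕜), ∃ d : ι → ℝ,
      (∀ k, 0 ≤ d k) ∧ U * A = diagonal (fun k => (d k : 𝕜)) * U := by
  have hH := hA.isHermitian
  refine ⟨star hH.eigenvectorUnitary, Unitary.star_mem hH.eigenvectorUnitary.2, hH.eigenvalues,
    hA.eigenvalues_nonneg, ?_⟩
  have hdiag := hH.conjStarAlgAut_star_eigenvectorUnitary
  rw [Unitary.conjStarAlgAut_star_apply] at hdiag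
  change _ = diagonal (RCLike.ofReal ∘ hH.eigenvalues) * _
  rw [← hdiag, Matrix.mul_assoc _ _ (star _),
    Unitary.mul_star_self_of_mem hH.eigenvectorUnitary.2, Matrix.mul_one]

theorem exists_isUnit_conjTranspose_mul_self_eq_inv {W : Matrix ι ι 𝕜} (hW : W.PosDef) :
    ∃ Q : Matrix ι ι 𝕜, IsUnit Q ∧ Qᴴ * Q = W⁻¹ := by
  obtain ⟨Q, hQ⟩ := CStarAlgebra.nonneg_iff_eq_star_mul_self.mp hW.inv.posSemidef.nonneg
  refine ⟨Q, isUnit_of_mul_isUnit_right (x := star Q) ?_, hQ.symm⟩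
  exact hQ ▸ hW.inv.isUnit

theorem exists_conjTranspose_mul_self_eq_inv_and_mul_eq_neg_diagonal_mul {W J : Matrix ι ι 𝕜}
    (hW : W.PosDef) (hJW : (-(J * W)).PosSemidef) :
    ∃ (P : Matrix ι ι 𝕜) (lam : ι → ℝ), IsUnit P ∧ (∀ k, 0 ≤ lam k) ∧
      Pᴴ * P = W⁻¹ ∧ P * J = -(diagonal (fun k => (lam k : 𝕜)) * P) := by
  obtain ⟨Q, hQ, hQW⟩ := exists_isUnit_conjTranspose_mul_self_eq_inv hW
  obtain ⟨U, hU, lam, hlam, hdiag⟩ :=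
    exists_unitary_mul_eq_diagonal_mul (hJW.mul_mul_conjTranspose_same Q)
  have hWinv : W * W⁻¹ = 1 := mul_nonsing_inv W ((isUnit_iff_isUnit_det W).mp hW.isUnit)
  have hUU : Uᴴ * U = 1 := Unitary.star_mul_self_of_mem hU
  have hUunit : IsUnit U := (Unitary.toUnits ⟨U, hU⟩).isUnit
  refine ⟨U * Q, lam, hUunit.mul hQ, hlam, ?_, ?_⟩
  · rw [conjTranspose_mul, Matrix.mul_assoc, ← Matrix.mul_assoc Uᴴ, hUU, Matrix.one_mul, hQW]
  · calc U * Q * J = U * Q * J * (W * (Qᴴ * Q)) := by rw [hQW, hWinv, Matrix.mul_one]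
      _ = -(U * (Q * -(J * W) * Qᴴ) * Q) := by noncomm_ring
      _ = -(diagonal (fun k => (lam k : 𝕜)) * (U * Q)) := by rw [hdiag, Matrix.mul_assoc]

end SimultaneousDiagonalization

section CollisionJacobian

variable {ι : Type*} [DecidableEq ι]

/-- The covariance matrix `diag(ω) - ω ωᵀ` of the one-hot encoding of a random element of `ι` with
distribution `ω`. -/
def covarianceMatrix (ω : ι → ℝ) : Matrix ι ι ℝ :=
  diagonal ω - vecMulVec ω ω

theorem covarianceMatrix_isSymm (ω : ι → ℝ) : (covarianceMatrix ω).IsSymm := by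
  simp only [IsSymm, covarianceMatrix, transpose_sub, diagonal_transpose, transpose_vecMulVec]

variable [Fintype ι] {ω : ι → ℝ}

/-- The Jacobian `Λ (E - I) + c E`, `E = ω 𝟙ᵀ`, of the collision term of a lattice Boltzmann model
with collision matrix `Λ`, weights `ω` and linear source coefficient `c`. -/
def collisionJacobian (Λ : Matrix ι ι ℝ) (ω : ι → ℝ) (c : ℝ) : Matrix ι ι ℝ :=
  Λ * (vecMulVec ω 1 - 1) + c • vecMulVec ω 1

theorem vecMulVec_one_mul_diagonal {R : Type*} [Semiring R] (u v : ι → R) :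
    vecMulVec u 1 * diagonal v = vecMulVec u v := by
  ext i j
  simp [vecMulVec_apply]

theorem one_vecMul_covarianceMatrix (hsum : ∑ i, ω i = 1) : 1 ᵥ* covarianceMatrix ω = 0 := by
  ext j
  simp [covarianceMatrix, vecMul_sub, vecMul_diagonal, vecMul_vecMulVec, dotProduct, hsum]

theorem covarianceMatrix_posSemidef (hω : 0 ≤ ω) (hsum : ∑ i, ω i = 1) :
    (covarianceMatrix ω).PosSemidef := by
  have hcenter : covarianceMatrix ω = (1 - vecMulVec ω 1) * diagonal ω := by
    rw [Matrix.sub_mul, Matrix.one_mul, vecMulVec_one_mul_diagonal, covarianceMatrix]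
  have hcenter_right : covarianceMatrix ω * (1 - vecMulVec ω 1)ᴴ = covarianceMatrix ω := by
    rw [← (covarianceMatrix_isSymm ω).eq, conjTranspose_eq_transpose_of_trivial, ← transpose_mul,
      Matrix.sub_mul, Matrix.one_mul, vecMulVec_mul, one_vecMul_covarianceMatrix hsum,
      vecMulVec_zero, sub_zero]
  rw [← hcenter_right, hcenter]
  exact (PosSemidef.diagonal hω).mul_mul_conjTranspose_same _

theorem collisionJacobian_mul_diagonal (Λ : Matrix ι ι ℝ) (ω : ι → ℝ) (c : ℝ) :
    collisionJacobian Λ ω c * diagonal ω = -(Λ * covarianceMatrix ω) + c • vecMulVec ω ω := by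
  rw [collisionJacobian, covarianceMatrix, Matrix.add_mul, Matrix.smul_mul, Matrix.mul_assoc,
    Matrix.sub_mul, Matrix.one_mul, vecMulVec_one_mul_diagonal, ← Matrix.mul_neg, neg_sub]

theorem posSemidef_neg_collisionJacobian_mul_diagonal {A : Matrix ι ι ℝ} {c : ℝ} (u : ι → ℝ)
    (hω : 0 ≤ ω) (hsum : ∑ i, ω i = 1) (hA : A.PosSemidef)
    (hcomm : Commute A (covarianceMatrix ω)) (hc : c ≤ 0) :
    (-(collisionJacobian (A + vecMulVec u 1) ω c * diagonal ω)).PosSemidef := by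
  have hprod : (A + vecMulVec u 1) * covarianceMatrix ω = A * covarianceMatrix ω := by
    rw [Matrix.add_mul, vecMulVec_mul, one_vecMul_covarianceMatrix hsum, vecMulVec_zero, add_zero]
  rw [collisionJacobian_mul_diagonal, hprod, neg_add, neg_neg, ← neg_smul]
  exact (posSemidef_mul_of_commute hA (covarianceMatrix_posSemidef hω hsum) hcomm).add
    ((posSemidef_vecMulVec_self_star ω).smul (neg_nonneg.mpr hc))

theorem commute_permMatrix_covarianceMatrix {σ : Equiv.Perm ι} (hω : ω ∘ σ = ω) :
    Commute (σ.permMatrix ℝ) (covarianceMatrix ω) := by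
  have hω_apply (i : ι) : ω (σ i) = ω i := congrFun hω i
  rw [commute_iff_eq, PEquiv.toMatrix_toPEquiv_mul, PEquiv.mul_toMatrix_toPEquiv]
  ext i j
  obtain ⟨k, rfl⟩ := σ.surjective j
  simp [covarianceMatrix, diagonal_apply, vecMulVec_apply, hω_apply]

end CollisionJacobian

section ParityRelaxation

variable {ι A : Type*} [Fintype ι] [DecidableEq ι] [Ring A] [Algebra ℝ A]

/-- The projection onto the `+1`-eigenspace of an involution `r`; the one onto the `-1`-eigenspace
is `parityProjection (-r)`. -/
noncomputable def parityProjection (r : A) : A :=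
  (2⁻¹ : ℝ) • (1 + r)

/-- The operator relaxing each joint parity class of the two involutions `r` and `t` at its own
rate. The signs in the rate names are the eigenvalues of `r` and `t`, in this order. -/
noncomputable def parityRelaxation (spp smp spm smm : ℝ) (r t : A) : A :=
  spp • (parityProjection r * parityProjection t) +
  smp • (parityProjection (-r) * parityProjection t) +
  spm • (parityProjection r * parityProjection (-t)) +
  smm • (parityProjection (-r) * parityProjection (-t))

theorem semiconjBy_parityProjection {m r r' : A} (h : SemiconjBy m r r') :
    SemiconjBy m (parityProjection r) (parityProjection r') :=
  ((SemiconjBy.one_right m).add_right h).smul_right _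

theorem semiconjBy_parityRelaxation {m r r' t t' : A} (spp smp spm smm : ℝ)
    (hr : SemiconjBy m r r') (ht : SemiconjBy m t t') :
    SemiconjBy m (parityRelaxation spp smp spm smm r t)
      (parityRelaxation spp smp spm smm r' t') := by
  have hr_even := semiconjBy_parityProjection hr
  have ht_even := semiconjBy_parityProjection ht
  have hr_odd := semiconjBy_parityProjection hr.neg_right
  have ht_odd := semiconjBy_parityProjection ht.neg_right
  exact ((((hr_even.mul_right ht_even).smul_right _).add_right
    ((hr_odd.mul_right ht_even).smul_right _)).add_right
    ((hr_even.mul_right ht_odd).smul_right _)).add_right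
    ((hr_odd.mul_right ht_odd).smul_right _)

theorem map_parityRelaxation {B : Type*} [Ring B] [Algebra ℝ B] (f : A →ₐ[ℝ] B)
    (spp smp spm smm : ℝ) (r t : A) :
    f (parityRelaxation spp smp spm smm r t) =
      parityRelaxation spp smp spm smm (f r) (f t) := by
  simp only [parityRelaxation, parityProjection, map_add, map_smul, map_mul, map_neg, map_one]

theorem commute_parityProjection {r t : A} (h : Commute r t) :
    Commute (parityProjection r) (parityProjection t) :=
  semiconjBy_parityProjection (semiconjBy_parityProjection h.symm).symm

theorem posSemidef_parityProjection {r : Matrix ι ι ℝ} (hr : r.IsHermitian) (hrr : r * r = 1) :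
    (parityProjection r).PosSemidef := by
  have hproj : IsStarProjection (parityProjection r) := by
    refine ⟨?_, (IsSelfAdjoint.all (2⁻¹ : ℝ)).smul ((IsSelfAdjoint.one _).add hr)⟩
    simp only [IsIdempotentElem, parityProjection, smul_mul_smul_comm, mul_add, add_mul, mul_one,
      one_mul, hrr]
    module
  exact hproj.nonneg.posSemidef

theorem posSemidef_parityRelaxation {spp smp spm smm : ℝ} {r t : Matrix ι ι ℝ}
    (hspp : 0 ≤ spp) (hsmp : 0 ≤ smp) (hspm : 0 ≤ spm) (hsmm : 0 ≤ smm)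
    (hr : r.IsHermitian) (hrr : r * r = 1) (ht : t.IsHermitian) (htt : t * t = 1)
    (hrt : Commute r t) :
    (parityRelaxation spp smp spm smm r t).PosSemidef := by
  have hterm {s : ℝ} {r t : Matrix ι ι ℝ} (hs : 0 ≤ s) (hr : r.IsHermitian) (hrr : r * r = 1)
      (ht : t.IsHermitian) (htt : t * t = 1) (hrt : Commute r t) :
      (s • (parityProjection r * parityProjection t)).PosSemidef :=
    (posSemidef_mul_of_commute (posSemidef_parityProjection hr hrr)
      (posSemidef_parityProjection ht htt) (commute_parityProjection hrt)).smul hs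
  have hrr' : -r * -r = 1 := by rw [neg_mul_neg, hrr]
  have htt' : -t * -t = 1 := by rw [neg_mul_neg, htt]
  exact (((hterm hspp hr hrr ht htt hrt).add (hterm hsmp hr.neg hrr' ht htt hrt.neg_left)).add
    (hterm hspm hr hrr ht.neg htt' hrt.neg_right)).add
    (hterm hsmm hr.neg hrr' ht.neg htt' hrt.neg_left.neg_right)

end ParityRelaxation

section InvolutivePermMatrix

variable {ι R : Type*} [DecidableEq ι] [Semiring R]

theorem permMatrix_isHermitian_of_mul_self [StarRing R] {σ : Equiv.Perm ι} (hσ : σ * σ = 1) :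
    (σ.permMatrix R).IsHermitian := by
  rw [IsHermitian, conjTranspose_permMatrix, inv_eq_of_mul_eq_one_left hσ]

variable [Fintype ι]

theorem permMatrix_mul_self_of_mul_self {σ : Equiv.Perm ι} (hσ : σ * σ = 1) :
    σ.permMatrix R * σ.permMatrix R = 1 := by
  rw [← permMatrix_mul, hσ, permMatrix_one]

theorem commute_permMatrix {σ τ : Equiv.Perm ι} (h : Commute σ τ) :
    Commute (σ.permMatrix R) (τ.permMatrix R) := by
  rw [commute_iff_eq, ← permMatrix_mul, ← permMatrix_mul, h.eq]

theorem semiconjBy_permMatrix_diagonal {M : Matrix ι ι R} {σ : Equiv.Perm ι} {ε : ι → R}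
    (hσ : σ * σ = 1) (hM : ∀ i j, M i (σ j) = ε i * M i j) :
    SemiconjBy M (σ.permMatrix R) (diagonal ε) := by
  have hσ_symm : σ.symm = σ := inv_eq_of_mul_eq_one_left hσ
  rw [SemiconjBy, PEquiv.mul_toMatrix_toPEquiv, hσ_symm]
  ext i j
  simp [hM]

end InvolutivePermMatrix

section D2Q9

/-- The exponents `(m, n)` of the monomials `p9 i = X ^ m * Y ^ n`. -/
noncomputable def exponent9 : Fin 9 ≃ Fin 3 × Fin 3 :=
  .ofBijective ![(0, 0), (1, 0), (0, 1), (2, 0), (0, 2), (1, 1), (2, 1), (1, 2), (2, 2)]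
    (by decide)

/-- The coordinates of the velocities `c9 j` as indices into the list `0, 1, -1` of nodes. -/
noncomputable def nodeIndex9 : Fin 9 ≃ Fin 3 × Fin 3 :=
  .ofBijective ![(0, 0), (1, 0), (0, 1), (2, 0), (0, 2), (1, 1), (2, 1), (2, 2), (1, 2)]
    (by decide)

/-- The permutation of the velocity indices induced by `(x, y) ↦ (-x, y)`. -/
def reflectX9 : Equiv.Perm (Fin 9) :=
  Function.Involutive.toPerm ![0, 3, 2, 1, 4, 6, 5, 8, 7] (by unfold Function.Involutive; decide)

/-- The permutation of the velocity indices induced by `(x, y) ↦ (x, -y)`. -/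
def reflectY9 : Equiv.Perm (Fin 9) :=
  Function.Involutive.toPerm ![0, 1, 4, 3, 2, 8, 7, 6, 5] (by unfold Function.Involutive; decide)

theorem p9_apply (i : Fin 9) (x y : ℝ) :
    p9 i x y = x ^ ((exponent9 i).1 : ℕ) * y ^ ((exponent9 i).2 : ℕ) := by
  fin_cases i <;> simp [p9, exponent9]

theorem c9_apply (j : Fin 9) :
    c9 j = (![0, 1, -1] (nodeIndex9 j).1, ![0, 1, -1] (nodeIndex9 j).2) := by
  fin_cases j <;> simp [c9, nodeIndex9]

theorem M9_eq_submatrix_kronecker_vandermonde :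
    M9 = ((vandermonde ![0, 1, -1])ᵀ ⊗ₖ (vandermonde ![0, 1, -1])ᵀ).submatrix
      exponent9 nodeIndex9 := by
  ext i j
  simp [M9, p9_apply, c9_apply, vandermonde_apply]

theorem isUnit_M9 : IsUnit M9 := by
  have hnodes : Function.Injective (![0, 1, -1] : Fin 3 → ℝ) := by
    intro i j
    fin_cases i <;> fin_cases j <;> norm_num
  have hV : IsUnit (vandermonde (![0, 1, -1] : Fin 3 → ℝ))ᵀ := by
    rw [isUnit_transpose, isUnit_iff_isUnit_det, isUnit_iff_ne_zero]
    exact det_vandermonde_ne_zero_iff.mpr hnodes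
  rw [M9_eq_submatrix_kronecker_vandermonde, isUnit_submatrix_equiv]
  exact Matrix.IsUnit.kronecker hV hV

theorem semiconjBy_M9_reflectX9 :
    SemiconjBy M9 (reflectX9.permMatrix ℝ) (diagonal fun i => (-1) ^ ((exponent9 i).1 : ℕ)) := by
  have hc (j : Fin 9) : c9 (reflectX9 j) = (-(c9 j).1, (c9 j).2) := by
    fin_cases j <;> simp [c9, reflectX9]
  refine semiconjBy_permMatrix_diagonal (by decide) fun i j => ?_
  simp only [M9, of_apply, hc, p9_apply]
  rw [neg_pow, mul_assoc]

theorem semiconjBy_M9_reflectY9 :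
    SemiconjBy M9 (reflectY9.permMatrix ℝ) (diagonal fun i => (-1) ^ ((exponent9 i).2 : ℕ)) := by
  have hc (j : Fin 9) : c9 (reflectY9 j) = ((c9 j).1, -(c9 j).2) := by
    fin_cases j <;> simp [c9, reflectY9]
  refine semiconjBy_permMatrix_diagonal (by decide) fun i j => ?_
  simp only [M9, of_apply, hc, p9_apply]
  rw [neg_pow, mul_left_comm]

/-- The D2Q9 operator relaxing the moments at rates given by their parities in `x` and `y`. -/
noncomputable def parityRelaxation9 (a sx sy b : ℝ) : Matrix (Fin 9) (Fin 9) ℝ :=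
  parityRelaxation a sx sy b (reflectX9.permMatrix ℝ) (reflectY9.permMatrix ℝ)

theorem M9_mul_parityRelaxation9 (a sx sy b : ℝ) :
    M9 * parityRelaxation9 a sx sy b = diagonal ![a, sx, sy, a, a, b, sy, sx, a] * M9 := by
  have hrates : parityRelaxation a sx sy b (fun i => (-1) ^ ((exponent9 i).1 : ℕ))
      (fun i => (-1) ^ ((exponent9 i).2 : ℕ)) = ![a, sx, sy, a, a, b, sy, sx, a] := by
    ext i
    fin_cases i <;> norm_num [parityRelaxation, parityProjection, exponent9]
  have hdiag := map_parityRelaxation (diagonalAlgHom (n := Fin 9) (α := ℝ) ℝ) a sx sy b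
    (fun i => (-1) ^ ((exponent9 i).1 : ℕ)) (fun i => (-1) ^ ((exponent9 i).2 : ℕ))
  rw [hrates] at hdiag
  exact (semiconjBy_parityRelaxation a sx sy b semiconjBy_M9_reflectX9
    semiconjBy_M9_reflectY9).eq.trans (congrArg (· * M9) hdiag.symm)

theorem M9_inv_mul_diagonal_mul_M9 (s0 a sx sy b : ℝ) :
    M9⁻¹ * diagonal ![s0, sx, sy, a, a, b, sy, sx, a] * M9 =
      parityRelaxation9 a sx sy b + vecMulVec (M9⁻¹ *ᵥ Pi.single 0 (s0 - a)) 1 := by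
  have hsplit : diagonal ![s0, sx, sy, a, a, b, sy, sx, a] =
      diagonal ![a, sx, sy, a, a, b, sy, sx, a] +
        vecMulVec (Pi.single 0 (s0 - a)) (Pi.single 0 1) := by
    ext i j
    fin_cases i <;> fin_cases j <;> simp [vecMulVec_apply]
  have hrow : Pi.single 0 1 ᵥ* M9 = 1 := by
    ext j
    simp [M9, p9]
  have hinv : M9⁻¹ * M9 = 1 := nonsing_inv_mul M9 ((isUnit_iff_isUnit_det M9).mp isUnit_M9)
  rw [hsplit, Matrix.mul_assoc, Matrix.add_mul, vecMulVec_mul, hrow, ← M9_mul_parityRelaxation9,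
    Matrix.mul_add, ← Matrix.mul_assoc, hinv, Matrix.one_mul, mul_vecMulVec]

theorem posSemidef_parityRelaxation9 {a sx sy b : ℝ} (ha : 0 ≤ a) (hsx : 0 ≤ sx) (hsy : 0 ≤ sy)
    (hb : 0 ≤ b) : (parityRelaxation9 a sx sy b).PosSemidef :=
  have hX : reflectX9 * reflectX9 = 1 := by decide
  have hY : reflectY9 * reflectY9 = 1 := by decide
  have hXY : Commute reflectX9 reflectY9 := by rw [commute_iff_eq]; decide
  posSemidef_parityRelaxation ha hsx hsy hb
    (permMatrix_isHermitian_of_mul_self hX) (permMatrix_mul_self_of_mul_self hX)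
    (permMatrix_isHermitian_of_mul_self hY) (permMatrix_mul_self_of_mul_self hY)
    (commute_permMatrix hXY)

theorem commute_parityRelaxation9_covarianceMatrix {ω : Fin 9 → ℝ} (a sx sy b : ℝ)
    (hX : ω ∘ reflectX9 = ω) (hY : ω ∘ reflectY9 = ω) :
    Commute (parityRelaxation9 a sx sy b) (covarianceMatrix ω) :=
  Commute.symm <| semiconjBy_parityRelaxation a sx sy b
    (commute_permMatrix_covarianceMatrix hX).symm (commute_permMatrix_covarianceMatrix hY).symm

end D2Q9

/-- For the D2Q9 MRT model with positive weights summing to `1`, symmetry conditions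
`s_{3|x²y} = s_y`, `s_{3|xy²} = s_x`, `s_{4|x²y²} = s_{2|x²} = s_{2|y²}`, nonnegative
relaxation parameters `s_x, s_y, s_{2|x²}, s_{2|y²}, s_{2|xy}` and `c ≤ 0`, the Jacobian
`J = M⁻¹SM·(E - I) + cE` has `J·W` symmetric and negative semidefinite; consequently the
model satisfies the stability structure: there are an invertible `P` and `λ_k ≥ 0` with
`PᵀP = W⁻¹` and `P·J = -diag(λ)·P`. -/
theorem stmt_10 (ω0 ω1 ω2 ωt s0 sx sy s2x2 s2y2 s2xy s3x2y s3xy2 s4x2y2 c : ℝ)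
    (hω0 : 0 < ω0) (hω1 : 0 < ω1) (hω2 : 0 < ω2) (hωt : 0 < ωt)
    (hsum : ω0 + 2 * ω1 + 2 * ω2 + 4 * ωt = 1)
    (h1 : s3x2y = sy) (h2 : s3xy2 = sx) (h3 : s4x2y2 = s2x2) (h4 : s2x2 = s2y2)
    (hsx : 0 ≤ sx) (hsy : 0 ≤ sy) (hs2x2 : 0 ≤ s2x2) (hs2y2 : 0 ≤ s2y2) (hs2xy : 0 ≤ s2xy)
    (hc : c ≤ 0) :
    let ω : Fin 9 → ℝ := ![ω0, ω1, ω2, ω1, ω2, ωt, ωt, ωt, ωt]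
    let W := Matrix.diagonal ω
    let E := Matrix.vecMulVec ω (fun _ => (1 : ℝ))
    let S := Matrix.diagonal ![s0, sx, sy, s2x2, s2y2, s2xy, s3x2y, s3xy2, s4x2y2]
    let J := M9⁻¹ * S * M9 * (E - 1) + c • E
    (J * W).IsSymm ∧
    (∀ x : Fin 9 → ℝ, x ⬝ᵥ (J * W).mulVec x ≤ 0) ∧
    ∃ (P : Matrix (Fin 9) (Fin 9) ℝ) (lam : Fin 9 → ℝ),
      IsUnit P.det ∧ (∀ k, 0 ≤ lam k) ∧
      Pᵀ * P = Matrix.diagonal (fun i => (ω i)⁻¹) ∧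
      P * J = -(Matrix.diagonal lam * P) := by
  rw [h1, h2, h3, ← h4]
  intro ω W E S J
  have hω : ∀ i, 0 < ω i := by
    simp [ω, Fin.forall_fin_succ, hω0, hω1, hω2, hωt]
  have hω_sum : ∑ i, ω i = 1 := calc
    ∑ i, ω i = ω0 + ω1 + ω2 + ω1 + ω2 + ωt + ωt + ωt + ωt := by simp [ω, Fin.sum_univ_castSucc]
    _ = 1 := by linarith
  have hcomm := commute_parityRelaxation9_covarianceMatrix (ω := ω) s2x2 sx sy s2xy
    (by ext i; fin_cases i <;> rfl) (by ext i; fin_cases i <;> rfl)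
  have hJW : (-(J * W)).PosSemidef := by
    simp only [J, S, M9_inv_mul_diagonal_mul_M9]
    exact posSemidef_neg_collisionJacobian_mul_diagonal _ (fun i => (hω i).le) hω_sum
      (posSemidef_parityRelaxation9 hs2x2 hsx hsy hs2xy) hcomm hc
  obtain ⟨P, lam, hP, hlam, hPP, hPJ⟩ :=
    exists_conjTranspose_mul_self_eq_inv_and_mul_eq_neg_diagonal_mul (𝕜 := ℝ)
      (PosDef.diagonal hω) hJW
  refine ⟨?_, fun x => ?_, P, lam, (isUnit_iff_isUnit_det P).mp hP, hlam, ?_, hPJ⟩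
  · simpa using hJW.isHermitian.neg
  · simpa [neg_mulVec] using hJW.dotProduct_mulVec_nonneg x
  · rw [← conjTranspose_eq_transpose_of_trivial, hPP]
    exact inv_eq_left_inv (by simp [(hω _).ne'])
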